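/- Exact linear regression condition for W_1 (the zero-remainder exchangeable-pair condition in the proof of Proposition 2): for every k ∈ ℝ^N with Σ_s k_s = B, D W_1(k) = −(2/B)·W_1(k) + (2(B−1)/(BN))·W_2(k) + (1/B)·W_3(k). In particular, the conditional expectation of the increment of the vector (W_1, W_2, W_3) for the multinomial exchangeable pair is an exact linear function of (W_1, W_2, W_3), with remainder R = 0. -/

import Mathlib

open Finset

/-- The multinomial moment `m_{s,t} = E[k_s k_t] = B(B−1)/N² + 1{s=t}·B/N`. -/
noncomputable def mMoment (B N : ℕ) (s t : Fin N) : ℝ :=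
  (B : ℝ) * ((B : ℝ) - 1) / ((N : ℝ)) ^ 2 + if s = t then (B : ℝ) / (N : ℝ) else 0

/-- `W_1(k) := (1/B²) Σ_{s,t} (k_s k_t − m_{s,t}) h(s,t)`. -/
noncomputable def W1 (B N : ℕ) (h : Fin N → Fin N → ℝ) (k : Fin N → ℝ) : ℝ :=
  (((B : ℝ)) ^ 2)⁻¹ * ∑ s : Fin N, ∑ t : Fin N, (k s * k t - mMoment B N s t) * h s t

/-- `W_2(k) := (1/B²) Σ_{s,t} (k_s − B/N) h(s,t)`. -/
noncomputable def W2 (B N : ℕ) (h : Fin N → Fin N → ℝ) (k : Fin N → ℝ) : ℝ :=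
  (((B : ℝ)) ^ 2)⁻¹ * ∑ s : Fin N, ∑ t : Fin N, (k s - (B : ℝ) / (N : ℝ)) * h s t

/-- `W_3(k) := (1/B²) Σ_s (k_s − B/N) h(s,s)`. -/
noncomputable def W3 (B N : ℕ) (h : Fin N → Fin N → ℝ) (k : Fin N → ℝ) : ℝ :=
  (((B : ℝ)) ^ 2)⁻¹ * ∑ s : Fin N, (k s - (B : ℝ) / (N : ℝ)) * h s s

/-- `k^{i→j} := k − e_i + e_j`. -/
def kmove {N : ℕ} (k : Fin N → ℝ) (i j : Fin N) : Fin N → ℝ :=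
  fun t => k t - (if t = i then 1 else 0) + (if t = j then 1 else 0)

/-- The exchangeable-pair average
`D W(k) := Σ_{i,j} (k_i/(BN))·(W(k^{i→j}) − W(k))`. -/
noncomputable def Dop (B N : ℕ) (W : (Fin N → ℝ) → ℝ) (k : Fin N → ℝ) : ℝ :=
  ∑ i : Fin N, ∑ j : Fin N, k i / ((B : ℝ) * (N : ℝ)) * (W (kmove k i j) - W k)

/-!
The operator `W ↦ D W(k)` is linear, kills constants, and satisfies a Leibniz rule with an error
term, the carré du champ `Γ`. So it suffices to know `D` and `Γ` on the coordinate functions: a move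
changes `k_s` by `1{s=j} − 1{s=i}`, hence on the hyperplane `Σ k_s = B` one has
`D k_s = −(k_s − B/N)/B`, and `Γ(k_s, k_t)` is affine in `k`. Consequently `D (k_s k_t)` is, for
each pair `(s, t)`, an exact combination of the centred moments `k_s k_t − m_{s,t}`, `k_s − B/N` and
`k_t − B/N`; pairing it with `h` gives the identity, the symmetry of `h` identifying the
contributions of the last two.
-/

/-- The carré du champ `Γ(F, G)(k)` of the exchangeable pair: the average of the product of the
increments of `F` and `G`, i.e. the defect of the Leibniz rule for `Dop`. It is not halved, unlike
in the usual convention for Markov generators. -/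
noncomputable def carreDuChamp (B N : ℕ) (F G : (Fin N → ℝ) → ℝ) (k : Fin N → ℝ) : ℝ :=
  ∑ i : Fin N, ∑ j : Fin N,
    k i / ((B : ℝ) * (N : ℝ)) * ((F (kmove k i j) - F k) * (G (kmove k i j) - G k))

section Calculus

variable {B N : ℕ} (F G : (Fin N → ℝ) → ℝ) (c : ℝ) (k : Fin N → ℝ)

lemma Dop_const_mul : Dop B N (fun x => c * F x) k = c * Dop B N F k := by
  simp only [Dop, ← mul_sub, mul_left_comm _ c, ← mul_sum]

lemma Dop_mul_const : Dop B N (fun x => F x * c) k = Dop B N F k * c := by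
  simp only [mul_comm _ c, Dop_const_mul]

lemma Dop_sub_const : Dop B N (fun x => F x - c) k = Dop B N F k := by
  simp only [Dop, sub_sub_sub_cancel_right]

lemma Dop_sum {ι : Type*} (S : Finset ι) (F : ι → (Fin N → ℝ) → ℝ) :
    Dop B N (fun x => ∑ a ∈ S, F a x) k = ∑ a ∈ S, Dop B N (F a) k := by
  simp only [Dop, ← sum_sub_distrib, mul_sum, sum_comm (t := S)]

lemma Dop_mul :
    Dop B N (fun x => F x * G x) k =
      F k * Dop B N G k + G k * Dop B N F k + carreDuChamp B N F G k := by
  simp only [Dop, carreDuChamp, mul_sum, ← sum_add_distrib]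
  refine sum_congr rfl fun i _ => sum_congr rfl fun j _ => ?_
  ring

end Calculus

section Coordinates

variable {B N : ℕ} {k : Fin N → ℝ}

lemma kmove_apply_sub (k : Fin N → ℝ) (i j s : Fin N) :
    kmove k i j s - k s = (if s = j then 1 else 0) - (if s = i then 1 else 0) := by
  rw [kmove]
  ring

lemma kmove_apply_sub_mul_kmove_apply_sub (k : Fin N → ℝ) (i j s t : Fin N) :
    (kmove k i j s - k s) * (kmove k i j t - k t) =
      (if s = t then 1 else 0) * ((if s = j then 1 else 0) + (if s = i then 1 else 0)) -
        ((if s = j then 1 else 0) * (if t = i then 1 else 0) +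
          (if t = j then 1 else 0) * (if s = i then 1 else 0)) := by
  rw [kmove_apply_sub, kmove_apply_sub]
  -- Both indicators can hold at a common `a` only if `s = t`: `1{s=a} 1{t=a} = 1{s=t} 1{s=a}`.
  grind

lemma sum_weight_mul_target_mul_source (k f g : Fin N → ℝ) :
    ∑ i, ∑ j, k i / ((B : ℝ) * (N : ℝ)) * (f j * g i) =
      (∑ j, f j) * (∑ i, k i * g i) / ((B : ℝ) * (N : ℝ)) := by
  rw [sum_mul_sum, sum_comm, sum_div]
  refine sum_congr rfl fun j _ => ?_
  rw [sum_div]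
  exact sum_congr rfl fun i _ => by ring

lemma sum_weight_mul_source (hN : N ≠ 0) (k g : Fin N → ℝ) :
    ∑ i, ∑ _j : Fin N, k i / ((B : ℝ) * (N : ℝ)) * g i = (∑ i, k i * g i) / (B : ℝ) := by
  have marginal := sum_weight_mul_target_mul_source (B := B) k 1 g
  simp only [Pi.one_apply, one_mul] at marginal
  rw [marginal, sum_const, card_univ, Fintype.card_fin, nsmul_one]
  field_simp

lemma sum_weight_mul_target (hB : B ≠ 0) (hk : ∑ i, k i = (B : ℝ)) (f : Fin N → ℝ) :
    ∑ i, ∑ j, k i / ((B : ℝ) * (N : ℝ)) * f j = (∑ j, f j) / (N : ℝ) := by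
  have marginal := sum_weight_mul_target_mul_source (B := B) k f 1
  simp only [Pi.one_apply, mul_one, hk] at marginal
  rw [marginal]
  field_simp

lemma Dop_coord (hB : B ≠ 0) (hk : ∑ i, k i = (B : ℝ)) (s : Fin N) :
    Dop B N (fun x => x s) k = -(1 / (B : ℝ)) * (k s - (B : ℝ) / (N : ℝ)) := by
  have hN : N ≠ 0 := s.pos.ne'
  simp only [Dop, kmove_apply_sub, mul_sub, sum_sub_distrib, sum_weight_mul_source hN,
    sum_weight_mul_target hB hk]
  simp only [mul_ite, mul_one, mul_zero, sum_ite_eq, mem_univ, if_true]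
  field_simp
  ring

lemma carreDuChamp_coord (hB : B ≠ 0) (hk : ∑ i, k i = (B : ℝ)) (s t : Fin N) :
    carreDuChamp B N (fun x => x s) (fun x => x t) k =
      (if s = t then 1 / (N : ℝ) + k s / (B : ℝ) else 0) - (k s + k t) / ((B : ℝ) * (N : ℝ)) := by
  have hN : N ≠ 0 := s.pos.ne'
  simp only [carreDuChamp, kmove_apply_sub_mul_kmove_apply_sub]
  simp only [mul_sub, mul_add, sum_sub_distrib, sum_add_distrib, sum_weight_mul_source hN,
    sum_weight_mul_target hB hk, sum_weight_mul_target_mul_source]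
  simp only [mul_ite, mul_one, mul_zero, sum_ite_eq, mem_univ, if_true]
  split_ifs <;> ring

lemma Dop_coord_mul_coord (hB : B ≠ 0) (hk : ∑ i, k i = (B : ℝ)) (s t : Fin N) :
    Dop B N (fun x => x s * x t) k =
      -(2 / (B : ℝ)) * (k s * k t - mMoment B N s t) +
        ((B : ℝ) - 1) / ((B : ℝ) * (N : ℝ)) *
          ((k s - (B : ℝ) / (N : ℝ)) + (k t - (B : ℝ) / (N : ℝ))) +
        (B : ℝ)⁻¹ * (if s = t then k s - (B : ℝ) / (N : ℝ) else 0) := by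
  have hN : (N : ℝ) ≠ 0 := Nat.cast_ne_zero.2 s.pos.ne'
  rw [Dop_mul, Dop_coord hB hk, Dop_coord hB hk, carreDuChamp_coord hB hk, mMoment]
  split_ifs <;> field_simp <;> ring

end Coordinates

lemma sum_sum_mul_swap_of_symm {ι R : Type*} [Fintype ι] [NonUnitalNonAssocSemiring R]
    {h : ι → ι → R} (hsymm : ∀ s t, h s t = h t s) (f : ι → R) :
    ∑ s, ∑ t, f t * h s t = ∑ s, ∑ t, f s * h s t := by
  rw [sum_comm]
  exact sum_congr rfl fun s _ => sum_congr rfl fun t _ => by rw [hsymm]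

lemma Dop_W1 {B N : ℕ} (h : Fin N → Fin N → ℝ) (k : Fin N → ℝ) :
    Dop B N (W1 B N h) k =
      ((B : ℝ) ^ 2)⁻¹ * ∑ s, ∑ t, Dop B N (fun x => x s * x t) k * h s t := by
  unfold W1
  simp only [Dop_const_mul, Dop_sum, Dop_mul_const, Dop_sub_const]

/-- exact linear regression condition for `W_1` (zero-remainder
exchangeable-pair condition): for every `k ∈ ℝ^N` with `Σ_s k_s = B`,
`D W_1(k) = −(2/B)·W_1(k) + (2(B−1)/(BN))·W_2(k) + (1/B)·W_3(k)`. -/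
theorem exchangeable_pair_W1 {B N : ℕ} (hB : 0 < B) (hN : 0 < N)
    (h : Fin N → Fin N → ℝ) (hsymm : ∀ s t, h s t = h t s)
    (k : Fin N → ℝ) (hk : ∑ s : Fin N, k s = (B : ℝ)) :
    Dop B N (W1 B N h) k =
      -(2 / (B : ℝ)) * W1 B N h k +
        2 * ((B : ℝ) - 1) / ((B : ℝ) * (N : ℝ)) * W2 B N h k +
        ((B : ℝ))⁻¹ * W3 B N h k := by
  have diagonal : ∑ s, ∑ t, (if s = t then k s - (B : ℝ) / N else 0) * h s t =
      ∑ s, (k s - (B : ℝ) / N) * h s s := by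
    simp only [ite_mul, zero_mul, sum_ite_eq, mem_univ, if_true]
  have paired_with_h : ∑ s, ∑ t, Dop B N (fun x => x s * x t) k * h s t =
      -(2 / (B : ℝ)) * ∑ s, ∑ t, (k s * k t - mMoment B N s t) * h s t +
        ((B : ℝ) - 1) / ((B : ℝ) * (N : ℝ)) *
          (∑ s, ∑ t, (k s - (B : ℝ) / N) * h s t + ∑ s, ∑ t, (k t - (B : ℝ) / N) * h s t) +
        (B : ℝ)⁻¹ * ∑ s, (k s - (B : ℝ) / N) * h s s := by
    rw [← diagonal]
    simp only [mul_sum, ← sum_add_distrib]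
    refine sum_congr rfl fun s _ => sum_congr rfl fun t _ => ?_
    rw [Dop_coord_mul_coord hB.ne' hk]
    ring
  rw [Dop_W1, paired_with_h, sum_sum_mul_swap_of_symm hsymm, W1, W2, W3]
  ring
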